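/- The quasi-consecutive patterns 1̲3̲4̲2 and 1̲2̲4̲3 are des-Wilf-equivalent: for all n ≥ 1 and k ≥ 0, the number of permutations of length n avoiding 1̲3̲4̲2 with exactly k descents equals the number of permutations of length n avoiding 1̲2̲4̲3 with exactly k descents. -/

import Mathlib

open scoped Classical

/-- The number of descents of a permutation of `Fin n` (one-line notation `π 0, π 1, …`). -/
def des {n : ℕ} (π : Equiv.Perm (Fin n)) : ℕ :=
  (Finset.univ.filter fun i : Fin n =>
    ∃ h : (i : ℕ) + 1 < n, π ⟨(i : ℕ) + 1, h⟩ < π i).card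

/-- `π` avoids the quasi-consecutive pattern 1̲3̲4̲2: there are no (0-indexed) positions
`i` and `j` with `i + 3 ≤ j < n` such that π_i < π_j < π_{i+1} < π_{i+2}. -/
def AvoidsA {n : ℕ} (π : Equiv.Perm (Fin n)) : Prop :=
  ¬ ∃ (i j : ℕ) (hj : j < n) (hij : i + 3 ≤ j), π ⟨i, by omega⟩ < π ⟨j, hj⟩ ∧ π ⟨j, hj⟩ < π ⟨i + 1, by omega⟩ ∧ π ⟨i + 1, by omega⟩ < π ⟨i + 2, by omega⟩

/-- `π` avoids the quasi-consecutive pattern 1̲2̲4̲3: there are no (0-indexed) positions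
`i` and `j` with `i + 3 ≤ j < n` such that π_i < π_{i+1} < π_j < π_{i+2}. -/
def AvoidsB {n : ℕ} (π : Equiv.Perm (Fin n)) : Prop :=
  ¬ ∃ (i j : ℕ) (hj : j < n) (hij : i + 3 ≤ j), π ⟨i, by omega⟩ < π ⟨i + 1, by omega⟩ ∧ π ⟨i + 1, by omega⟩ < π ⟨j, hj⟩ ∧ π ⟨j, hj⟩ < π ⟨i + 2, by omega⟩

open Finset Polynomial

namespace QC

/-- Prepend the letter `a` to the permutation `σ`. -/
noncomputable def pre {n : ℕ} (a : Fin (n + 1)) (σ : Equiv.Perm (Fin n)) : Equiv.Perm (Fin (n + 1)) :=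
  Equiv.ofBijective (Fin.cons a (fun i => a.succAbove (σ i)) : Fin (n + 1) → Fin (n + 1))
    (Finite.injective_iff_bijective.mp (by
      rw [Fin.cons_injective_iff]
      refine ⟨?_, fun i j h => σ.injective (Fin.succAbove_right_injective h)⟩
      rintro ⟨i, hi⟩
      exact Fin.succAbove_ne a _ hi))

lemma pre_zero {n : ℕ} (a : Fin (n + 1)) (σ : Equiv.Perm (Fin n)) : pre a σ 0 = a := rfl

lemma pre_succ {n : ℕ} (a : Fin (n + 1)) (σ : Equiv.Perm (Fin n)) (i : Fin n) :
    pre a σ i.succ = a.succAbove (σ i) := rfl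

lemma pre_mk_zero {n : ℕ} (a : Fin (n + 1)) (σ : Equiv.Perm (Fin n)) (h : 0 < n + 1) :
    pre a σ ⟨0, h⟩ = a := rfl

lemma pre_mk_succ {n : ℕ} (a : Fin (n + 1)) (σ : Equiv.Perm (Fin n)) (i : ℕ) (h : i + 1 < n + 1) :
    pre a σ ⟨i + 1, h⟩ = a.succAbove (σ ⟨i, by omega⟩) := rfl

lemma pre_bij (n : ℕ) : Function.Bijective
    (fun p : Equiv.Perm (Fin n) × Fin (n + 1) => pre p.2 p.1) := by
  rw [Fintype.bijective_iff_injective_and_card]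
  constructor
  · rintro ⟨σ, a⟩ ⟨τ, b⟩ h
    simp only at h
    have h0 : a = b := by
      have := congrArg (fun π : Equiv.Perm (Fin (n + 1)) => π 0) h
      simpa [pre_zero] using this
    subst h0
    have : σ = τ := by
      ext i
      have := congrArg (fun π : Equiv.Perm (Fin (n + 1)) => π i.succ) h
      simp only [pre_succ] at this
      rw [Fin.succAbove_right_injective this]
    rw [this]
  · simp [Fintype.card_perm, Nat.factorial_succ, mul_comm]

lemma sum_pre {n : ℕ} (F : Equiv.Perm (Fin (n + 1)) → ℕ[X]) :
    ∑ π, F π = ∑ σ : Equiv.Perm (Fin n), ∑ a, F (pre a σ) := by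
  rw [← Fintype.sum_prod_type' (f := fun σ a => F (pre a σ))]
  exact ((pre_bij n).sum_comp F).symm

lemma sum_first {n : ℕ} (F : Equiv.Perm (Fin (n + 1)) → ℕ[X]) (a : ℕ) (ha : a < n + 1) :
    (∑ π, if (π 0).val = a then F π else 0) =
      ∑ σ : Equiv.Perm (Fin n), F (pre ⟨a, ha⟩ σ) := by
  rw [sum_pre]
  refine Finset.sum_congr rfl fun σ _ => ?_
  rw [Finset.sum_eq_single ⟨a, ha⟩]
  · simp [pre_zero]
  · intro b _ hb
    rw [if_neg]
    intro h
    exact hb (Fin.ext h)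
  · simp

lemma sum_fiber {n : ℕ} (G : Equiv.Perm (Fin (n + 1)) → ℕ[X]) (s : Finset ℕ) :
    (∑ b ∈ s, ∑ σ, if (σ 0).val = b then G σ else 0) =
      ∑ σ, if (σ 0).val ∈ s then G σ else 0 := by
  rw [Finset.sum_comm]
  refine Finset.sum_congr rfl fun σ _ => ?_
  rw [Finset.sum_ite_eq]

def U {n : ℕ} (π : Equiv.Perm (Fin (n + 1))) : Prop :=
  ∃ h : 1 < n + 1, π 0 < π ⟨1, h⟩

def S {n : ℕ} (π : Equiv.Perm (Fin (n + 1))) : Prop :=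
  ∃ h : 1 < n + 1, (π 0).val + 1 = (π ⟨1, h⟩).val

lemma sA_val {n : ℕ} (a : Fin (n + 1)) (b : Fin n) :
    (a.succAbove b).val = if b.val < a.val then b.val else b.val + 1 := by
  simp only [Fin.succAbove, Fin.lt_def, Fin.val_castSucc]
  split_ifs <;> rfl

lemma U_pre {n : ℕ} (a : Fin (n + 2)) (σ : Equiv.Perm (Fin (n + 1))) :
    U (pre a σ) ↔ a.val ≤ (σ 0).val := by
  have : ∀ h : 1 < n + 1 + 1, pre a σ ⟨1, h⟩ = a.succAbove (σ 0) := fun h => rfl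
  simp only [U, this, pre_zero, Fin.lt_def, sA_val]
  have h : 1 < n + 1 + 1 := by omega
  simp only [h, exists_true_left]
  split_ifs <;> omega

lemma S_pre {n : ℕ} (a : Fin (n + 2)) (σ : Equiv.Perm (Fin (n + 1))) :
    S (pre a σ) ↔ (σ 0).val = a.val := by
  have : ∀ h : 1 < n + 1 + 1, pre a σ ⟨1, h⟩ = a.succAbove (σ 0) := fun h => rfl
  simp only [S, this, pre_zero, sA_val]
  have h : 1 < n + 1 + 1 := by omega
  simp only [h, exists_true_left]
  split_ifs <;> omega

lemma S_U {n : ℕ} (π : Equiv.Perm (Fin (n + 1))) (h : S π) : U π := by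
  obtain ⟨h, h'⟩ := h
  exact ⟨h, by rw [Fin.lt_def]; omega⟩

lemma des_pre {n : ℕ} (a : Fin (n + 2)) (σ : Equiv.Perm (Fin (n + 1))) :
    des (pre a σ) = des σ + if (σ 0).val < a.val then 1 else 0 := by
  unfold des
  rw [Finset.card_filter, Finset.card_filter, Fin.sum_univ_succ, add_comm]
  have h1 : (∃ h : ((0 : Fin (n + 2)) : ℕ) + 1 < n + 1 + 1,
      pre a σ ⟨((0 : Fin (n + 2)) : ℕ) + 1, h⟩ < pre a σ 0) ↔ (σ 0).val < a.val := by
    have : ∀ h : ((0 : Fin (n + 2)) : ℕ) + 1 < n + 1 + 1,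
      pre a σ ⟨((0 : Fin (n + 2)) : ℕ) + 1, h⟩ = a.succAbove (σ 0) := fun h => rfl
    simp only [this, pre_zero, Fin.lt_def, sA_val]
    have h : ((0 : Fin (n + 2)) : ℕ) + 1 < n + 1 + 1 := by simp
    simp only [h, exists_true_left]
    split_ifs <;> omega
  have h2 : ∀ i : Fin (n + 1), (∃ h : ((i.succ : Fin (n + 2)) : ℕ) + 1 < n + 1 + 1,
      pre a σ ⟨((i.succ : Fin (n + 2)) : ℕ) + 1, h⟩ < pre a σ i.succ) ↔
      ∃ h : (i : ℕ) + 1 < n + 1, σ ⟨(i : ℕ) + 1, h⟩ < σ i := by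
    intro i
    constructor
    · rintro ⟨h, h'⟩
      exact ⟨by simpa using h, (Fin.strictMono_succAbove a).lt_iff_lt.mp h'⟩
    · rintro ⟨h, h'⟩
      exact ⟨by simpa using h, (Fin.strictMono_succAbove a).lt_iff_lt.mpr h'⟩
  congr 1
  · refine Finset.sum_congr rfl fun i _ => ?_
    exact if_congr (h2 i) rfl rfl
  · exact if_congr h1 rfl rfl

lemma A_pre {n : ℕ} (a : Fin (n + 2)) (σ : Equiv.Perm (Fin (n + 1))) :
    AvoidsA (pre a σ) ↔ AvoidsA σ ∧ (U σ → (σ 0).val ≤ a.val) := by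
  have mono : ∀ {x y}, a.succAbove x < a.succAbove y ↔ x < y :=
    (Fin.strictMono_succAbove a).lt_iff_lt
  constructor
  · intro H
    refine ⟨?_, ?_⟩
    · rintro ⟨i, j, hj, hij, h1, h2, h3⟩
      exact H ⟨i + 1, j + 1, by omega, by omega, mono.mpr h1, mono.mpr h2, mono.mpr h3⟩
    · rintro ⟨h, hu⟩
      by_contra hlt
      push Not at hlt
      obtain ⟨⟨j, hj⟩, hj'⟩ := σ.surjective ⟨a.val, by omega⟩
      rw [Fin.lt_def] at hu
      have e0 : j ≠ 0 := by
        rintro rfl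
        have : (σ 0).val = a.val := congrArg Fin.val hj'
        omega
      have e1 : j ≠ 1 := by
        rintro rfl
        have : (σ ⟨1, h⟩).val = a.val := congrArg Fin.val hj'
        omega
      refine H ⟨0, j + 1, by omega, by omega, ?_, ?_, ?_⟩
      · rw [pre_mk_zero, pre_mk_succ, hj', Fin.lt_def, sA_val]
        simp
      · refine mono.mpr ?_
        rw [hj', Fin.lt_def]
        exact hlt
      · refine mono.mpr ?_
        rw [Fin.lt_def]
        exact hu
  · rintro ⟨H, H'⟩ ⟨i, j, hj, hij, h1, h2, h3⟩
    obtain ⟨j, rfl⟩ : ∃ j', j = j' + 1 := ⟨j - 1, by omega⟩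
    rcases i with _ | i
    · have h2' := mono.mp h2
      have h3' := mono.mp h3
      have := H' ⟨by omega, h3'⟩
      rw [pre_mk_zero, pre_mk_succ, Fin.lt_def, sA_val] at h1
      rw [Fin.lt_def] at h2'
      change _ < (σ 0).val at h2'
      split_ifs at h1 <;> omega
    · exact H ⟨i, j, by omega, by omega, mono.mp h1, mono.mp h2, mono.mp h3⟩

lemma B_pre {n : ℕ} (a : Fin (n + 2)) (σ : Equiv.Perm (Fin (n + 1))) :
    AvoidsB (pre a σ) ↔ AvoidsB σ ∧ (U σ → ¬ S σ → (σ 0).val < a.val) := by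
  have mono : ∀ {x y}, a.succAbove x < a.succAbove y ↔ x < y :=
    (Fin.strictMono_succAbove a).lt_iff_lt
  constructor
  · intro H
    refine ⟨?_, ?_⟩
    · rintro ⟨i, j, hj, hij, h1, h2, h3⟩
      exact H ⟨i + 1, j + 1, by omega, by omega, mono.mpr h1, mono.mpr h2, mono.mpr h3⟩
    · rintro ⟨h, hu⟩ hs
      by_contra hlt
      push Not at hlt
      rw [Fin.lt_def] at hu
      have hne : (σ 0).val + 1 ≠ (σ ⟨1, h⟩).val := fun hh => hs ⟨h, hh⟩
      obtain ⟨⟨j, hj⟩, hj'⟩ := σ.surjective ⟨(σ 0).val + 1, by omega⟩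
      have e0 : j ≠ 0 := by
        rintro rfl
        have : (σ 0).val = (σ 0).val + 1 := congrArg Fin.val hj'
        omega
      have e1 : j ≠ 1 := by
        rintro rfl
        have : (σ ⟨1, h⟩).val = (σ 0).val + 1 := congrArg Fin.val hj'
        omega
      refine H ⟨0, j + 1, by omega, by omega, ?_, ?_, ?_⟩
      · rw [pre_mk_zero, pre_mk_succ, Fin.lt_def, sA_val]
        change _ < if (σ 0).val < _ then (σ 0).val else (σ 0).val + 1
        split_ifs <;> omega
      · refine mono.mpr ?_
        rw [hj', Fin.lt_def]
        exact Nat.lt_succ_self _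
      · refine mono.mpr ?_
        rw [hj', Fin.lt_def]
        change (σ 0).val + 1 < (σ ⟨1, h⟩).val
        omega
  · rintro ⟨H, H'⟩ ⟨i, j, hj, hij, h1, h2, h3⟩
    obtain ⟨j, rfl⟩ : ∃ j', j = j' + 1 := ⟨j - 1, by omega⟩
    rcases i with _ | i
    · have h2' := mono.mp h2
      have h3' := mono.mp h3
      rw [Fin.lt_def] at h2' h3'
      change (σ 0).val < _ at h2'
      change _ < (σ ⟨1, by omega⟩).val at h3'
      have := H' ⟨by omega, by rw [Fin.lt_def]; omega⟩ (by rintro ⟨h, hs⟩; omega)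
      rw [pre_mk_zero, pre_mk_succ, Fin.lt_def, sA_val] at h1
      change _ < if (σ 0).val < _ then (σ 0).val else (σ 0).val + 1 at h1
      split_ifs at h1 <;> omega
    · exact H ⟨i, j, by omega, by omega, mono.mp h1, mono.mp h2, mono.mp h3⟩

/-- Generating polynomial by descents of the permutations with property `P` and first letter `a`. -/
noncomputable def gf (n : ℕ) (P : Equiv.Perm (Fin (n + 1)) → Prop) (a : ℕ) : ℕ[X] :=
  ∑ π, if (π 0).val = a then (if P π then X ^ des π else 0) else 0

noncomputable def DA (n a : ℕ) := gf n (fun π => AvoidsA π ∧ ¬ U π) a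
noncomputable def UA (n a : ℕ) := gf n (fun π => AvoidsA π ∧ U π) a
noncomputable def DB (n a : ℕ) := gf n (fun π => AvoidsB π ∧ ¬ U π) a
noncomputable def SB (n a : ℕ) := gf n (fun π => AvoidsB π ∧ S π) a
noncomputable def TB (n a : ℕ) := gf n (fun π => AvoidsB π ∧ U π ∧ ¬ S π) a

lemma DA_succ (n a : ℕ) (ha : a < n + 2) :
    DA (n + 1) a = X * (∑ b ∈ range a, DA n b + ∑ b ∈ range a, UA n b) := by
  unfold DA UA gf
  rw [sum_first _ a ha, sum_fiber, sum_fiber, ← Finset.sum_add_distrib, Finset.mul_sum]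
  refine Finset.sum_congr rfl fun σ _ => ?_
  simp only [A_pre, U_pre, des_pre, mem_range]
  by_cases h1 : AvoidsA σ <;> by_cases h2 : U σ <;> by_cases h3 : (σ 0).val < a <;>
    simp_all [pow_succ, mul_comm, le_of_lt]

lemma UA_succ (n a : ℕ) (ha : a < n + 2) :
    UA (n + 1) a = ∑ b ∈ Ico a (n + 1), DA n b + UA n a := by
  unfold DA UA gf
  rw [sum_first _ a ha, sum_fiber, ← Finset.sum_add_distrib]
  refine Finset.sum_congr rfl fun σ _ => ?_
  have := (σ 0).isLt
  simp only [A_pre, U_pre, des_pre, mem_Ico, this, and_true]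
  by_cases h1 : AvoidsA σ <;> by_cases h2 : U σ <;>
    rcases lt_trichotomy (σ 0).val a with h3 | h3 | h3 <;>
    first
    | simp [h1, h2, h3]; done
    | simp [h1, h2, h3, h3.not_gt, h3.le, h3.not_ge, h3.ne, h3.ne']

lemma DB_succ (n a : ℕ) (ha : a < n + 2) :
    DB (n + 1) a = X * (∑ b ∈ range a, DB n b + ∑ b ∈ range a, (SB n b + TB n b)) := by
  rw [Finset.sum_add_distrib]
  unfold DB SB TB gf
  rw [sum_first _ a ha, sum_fiber, sum_fiber, sum_fiber, ← Finset.sum_add_distrib,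
    ← Finset.sum_add_distrib, Finset.mul_sum]
  refine Finset.sum_congr rfl fun σ _ => ?_
  have hs := S_U σ
  simp only [B_pre, U_pre, des_pre, mem_range]
  by_cases h1 : AvoidsB σ <;> by_cases h2 : U σ <;> by_cases h4 : S σ <;>
    by_cases h3 : (σ 0).val < a <;>
    simp_all [pow_succ, mul_comm]

lemma SB_succ (n a : ℕ) (ha : a < n + 2) :
    SB (n + 1) a = DB n a + SB n a := by
  unfold DB SB gf
  rw [sum_first _ a ha, ← Finset.sum_add_distrib]
  refine Finset.sum_congr rfl fun σ _ => ?_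
  have hs := S_U σ
  simp only [B_pre, S_pre, des_pre]
  by_cases h1 : AvoidsB σ <;> by_cases h2 : U σ <;> by_cases h4 : S σ <;>
    by_cases h3 : (σ 0).val = a <;>
    simp_all

lemma STB_succ (n a : ℕ) (ha : a < n + 2) :
    SB (n + 1) a + TB (n + 1) a =
      ∑ b ∈ Ico a (n + 1), DB n b + ∑ b ∈ Ico a (n + 1), SB n b := by
  unfold DB SB TB gf
  rw [sum_first _ a ha, sum_first _ a ha, sum_fiber, sum_fiber, ← Finset.sum_add_distrib,
    ← Finset.sum_add_distrib]
  refine Finset.sum_congr rfl fun σ _ => ?_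
  have hs := S_U σ
  have := (σ 0).isLt
  simp only [B_pre, S_pre, U_pre, des_pre, mem_Ico, this, and_true]
  by_cases h1 : AvoidsB σ <;> by_cases h2 : U σ <;> by_cases h4 : S σ <;>
    rcases lt_trichotomy (σ 0).val a with h3 | h3 | h3 <;>
    first
    | simp_all; done
    | simp_all [h3.not_gt, h3.le, h3.not_ge, h3.ne, h3.ne']

lemma gf_zero_of_ge (n : ℕ) (P : Equiv.Perm (Fin (n + 1)) → Prop) (a : ℕ) (ha : n + 1 ≤ a) :
    gf n P a = 0 := by
  unfold gf
  refine Finset.sum_eq_zero fun π _ => ?_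
  rw [if_neg]
  have := (π 0).isLt
  omega

lemma main (n : ℕ) : ∀ a, DA n a = DB n a ∧ UA n a = SB n a + TB n a ∧
    UA n a = ∑ b ∈ Ico a (n + 1), SB n b := by
  induction n with
  | zero =>
    intro a
    have hU : ∀ π : Equiv.Perm (Fin (0 + 1)), ¬ U π := by
      rintro π ⟨h, _⟩
      omega
    have hS : ∀ π : Equiv.Perm (Fin (0 + 1)), ¬ S π := fun π h => hU π (S_U π h)
    have hA : ∀ π : Equiv.Perm (Fin (0 + 1)), AvoidsA π := by
      rintro π ⟨i, j, h, h', _⟩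
      omega
    have hB : ∀ π : Equiv.Perm (Fin (0 + 1)), AvoidsB π := by
      rintro π ⟨i, j, h, h', _⟩
      omega
    simp [DA, DB, UA, SB, TB, gf, hU, hS, hA, hB]
  | succ n ih =>
    intro a
    by_cases ha : a < n + 2
    · refine ⟨?_, ?_, ?_⟩
      · rw [DA_succ n a ha, DB_succ n a ha, Finset.sum_congr rfl fun b _ => (ih b).1,
          Finset.sum_congr (g := fun b => SB n b + TB n b) rfl fun b _ => (ih b).2.1]
      · rw [UA_succ n a ha, STB_succ n a ha, Finset.sum_congr rfl fun b _ => (ih b).1,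
          (ih a).2.2]
      · rw [UA_succ n a ha, Finset.sum_congr rfl fun b _ => (ih b).1, (ih a).2.2,
          Finset.sum_Ico_succ_top (b := n + 1) (by omega), ← Finset.sum_add_distrib]
        rw [SB_succ n (n + 1) (by omega)]
        have e1 : DB n (n + 1) = 0 := gf_zero_of_ge _ _ _ le_rfl
        have e2 : SB n (n + 1) = 0 := gf_zero_of_ge _ _ _ le_rfl
        rw [e1, e2, add_zero, add_zero]
        refine Finset.sum_congr rfl fun b hb => ?_
        rw [SB_succ n b (by have := Finset.mem_Ico.mp hb; omega)]
    · rw [Finset.Ico_eq_empty (by omega)]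
      simp [DA, DB, UA, SB, TB, gf_zero_of_ge _ _ a (by omega : n + 1 + 1 ≤ a)]

lemma totA (n : ℕ) : (∑ π : Equiv.Perm (Fin (n + 1)), if AvoidsA π then (X : ℕ[X]) ^ des π else 0) =
    ∑ b ∈ range (n + 1), DA n b + ∑ b ∈ range (n + 1), UA n b := by
  unfold DA UA gf
  rw [sum_fiber, sum_fiber, ← Finset.sum_add_distrib]
  refine Finset.sum_congr rfl fun σ _ => ?_
  have := (σ 0).isLt
  simp only [mem_range, this, if_true]
  by_cases h1 : AvoidsA σ <;> by_cases h2 : U σ <;> simp [h1, h2]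

lemma totB (n : ℕ) : (∑ π : Equiv.Perm (Fin (n + 1)), if AvoidsB π then (X : ℕ[X]) ^ des π else 0) =
    ∑ b ∈ range (n + 1), DB n b + ∑ b ∈ range (n + 1), (SB n b + TB n b) := by
  rw [Finset.sum_add_distrib]
  unfold DB SB TB gf
  rw [sum_fiber, sum_fiber, sum_fiber, ← Finset.sum_add_distrib, ← Finset.sum_add_distrib]
  refine Finset.sum_congr rfl fun σ _ => ?_
  have := (σ 0).isLt
  have hs := S_U σ
  simp only [mem_range, this, if_true]
  by_cases h1 : AvoidsB σ <;> by_cases h2 : U σ <;> by_cases h4 : S σ <;> simp_all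

lemma card_eq_coeff (n k : ℕ) (P : Equiv.Perm (Fin n) → Prop) :
    Nat.card {π : Equiv.Perm (Fin n) // P π ∧ des π = k} =
      (∑ π : Equiv.Perm (Fin n), if P π then (X : ℕ[X]) ^ des π else 0).coeff k := by
  rw [Nat.card_eq_fintype_card, Fintype.card_subtype, Polynomial.finsetSum_coeff,
    Finset.card_filter]
  refine Finset.sum_congr rfl fun π _ => ?_
  by_cases h : P π <;> by_cases h' : des π = k <;> simp [h, h', Polynomial.coeff_X_pow, eq_comm]
  omega

end QC

/-- The quasi-consecutive patterns 1̲3̲4̲2 and 1̲2̲4̲3 are des-Wilf-equivalent. -/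
theorem statement17 (n : ℕ) (hn : 1 ≤ n) (k : ℕ) :
    Nat.card {π : Equiv.Perm (Fin n) // AvoidsA π ∧ des π = k} =
      Nat.card {π : Equiv.Perm (Fin n) // AvoidsB π ∧ des π = k} := by
  obtain ⟨n, rfl⟩ : ∃ m, n = m + 1 := ⟨n - 1, by omega⟩
  rw [QC.card_eq_coeff, QC.card_eq_coeff, QC.totA, QC.totB,
    Finset.sum_congr rfl fun b _ => (QC.main n b).1,
    Finset.sum_congr (g := fun b => QC.SB n b + QC.TB n b) rfl fun b _ => (QC.main n b).2.1]
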